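/- arXiv:2411.17613 — 2 statements merged into one kernel-verified Lean document; each statement's English description precedes it below -/
import Mathlib

section
/- For all natural numbers m ≥ 1, x and y, the number of triples consisting of a rooted forest F on [m], a function assigning to each non-root vertex of F an element of {1,…,x}, and a function assigning to each root of F an element of {1,…,y}, equals (m·x + y)^{m−1} · y. -/
/-- A rooted forest on `[m]`: an acyclic simple graph on `Fin m` together with a chosen
set of roots containing exactly one vertex from each connected component. -/
structure RootedForest (m : ℕ) where
  graph : SimpleGraph (Fin m)
  acyclic : graph.IsAcyclic
  roots : Set (Fin m)
  existsUnique_root : ∀ v : Fin m, ∃! r, r ∈ roots ∧ graph.Reachable r v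

/-!
A rooted forest is the same thing as a parent map `p : V → Option V` (with value `none` at the
roots) whose parent relation is well-founded. Giving every vertex `v` the weight `w (p v)`, the
well-founded parent maps on a nonempty finite `V` have total weight
`w none * (∑ o, w o) ^ (|V| - 1)`, and the theorem is the case `w none = y`, `w (some v) = x`.

The weighted formula is proved by contracting a vertex `a` into its parent `o` (or into the absent
parent `none`): a parent map on `V` becomes a parent map on `V \ {a}`, and `w a` is added to the
weight of `o`. This does not change the total weight `T = ∑ o, w o`, so by induction the parent
maps with `p a = o` contribute `w o * w' none * T ^ (|V| - 2)`, where `w' none` is `w none + w a`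
if `o = none` and `w none` otherwise. Summing over `o ≠ a` gives `w none * T * T ^ (|V| - 2)`.
-/

open Relation

variable {V W U A B R : Type*}

/-- `IsParent p w v` says that `w` is the parent of `v` under the parent map `p`, a vertex `v` with
`p v = none` being a root. The child is the second argument, so that `WellFounded (IsParent p)`
means that going from each vertex to its parent always ends at a root. -/
def IsParent (p : V → Option V) (w v : V) : Prop :=
  p v = some w

lemma wellFounded_isParent_conj_iff (e : V ≃ W) (p : V → Option V) :
    WellFounded (IsParent (Option.map e ∘ p ∘ e.symm)) ↔ WellFounded (IsParent p) := by
  refine (e.surjective.wellFounded_iff ?_).symm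
  simp [IsParent]

section ParentGraph

variable {p q : V → Option V} {v w r s : V} {G H : SimpleGraph V}

/-- The graph of a parent map, joining every vertex to its parent. -/
def parentGraph (p : V → Option V) : SimpleGraph V :=
  SimpleGraph.fromRel (IsParent p)

lemma parentGraph_adj (hp : WellFounded (IsParent p)) :
    (parentGraph p).Adj v w ↔ IsParent p v w ∨ IsParent p w v := by
  refine (SimpleGraph.fromRel_adj ..).trans (and_iff_right_of_imp ?_)
  rintro h rfl
  exact hp.irrefl.irrefl v (h.elim id id)

/-- A walk that leaves the set of descendants of `v` would have to use the edge from `v` to its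
parent. -/
lemma reflTransGen_isParent_of_reachable (hp : WellFounded (IsParent p)) (hG : G ≤ parentGraph p)
    (hv : ∀ u, IsParent p u v → ¬ G.Adj v u) (h : G.Reachable v w) :
    ReflTransGen (IsParent p) v w := by
  rw [SimpleGraph.reachable_iff_reflTransGen] at h
  induction h with
  | refl => exact .refl
  | @tail a b _ hab ih =>
    rcases (parentGraph_adj hp).1 (hG hab) with hab' | hba
    · exact ih.tail hab'
    · rcases ih.cases_tail with rfl | ⟨c, hvc, hca⟩
      · exact absurd hab (hv b hba)
      · obtain rfl : c = b := Option.some_injective _ (hca.symm.trans hba)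
        exact hvc

lemma parentGraph_isBridge (hp : WellFounded (IsParent p)) (hwv : IsParent p w v) :
    (parentGraph p).IsBridge s(v, w) := by
  rw [SimpleGraph.isBridge_iff]
  intro hvw
  have w_descends : ReflTransGen (IsParent p) v w := by
    refine reflTransGen_isParent_of_reachable hp (SimpleGraph.deleteEdges_le _) (fun u hu h => ?_)
      hvw
    obtain rfl : w = u := Option.some_injective _ (hwv.symm.trans hu)
    simp at h
  exact hp.transGen.irrefl.irrefl v (.tail' w_descends hwv)

lemma parentGraph_isAcyclic (hp : WellFounded (IsParent p)) : (parentGraph p).IsAcyclic := by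
  rw [SimpleGraph.isAcyclic_iff_forall_adj_isBridge]
  intro v w hvw
  rcases (parentGraph_adj hp).1 hvw with h | h
  · exact Sym2.eq_swap ▸ parentGraph_isBridge hp h
  · exact parentGraph_isBridge hp h

lemma exists_root_reachable (hp : WellFounded (IsParent p)) (v : V) :
    ∃ r, p r = none ∧ (parentGraph p).Reachable r v := by
  induction v using hp.induction with
  | _ v ih =>
    rcases hv : p v with _ | w
    · exact ⟨v, hv, .rfl⟩
    · obtain ⟨r, hr, hrw⟩ := ih w hv
      exact ⟨r, hr, hrw.trans ((parentGraph_adj hp).2 (.inl hv)).reachable⟩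

lemma eq_of_reachable_of_eq_none (hp : WellFounded (IsParent p)) (hr : p r = none)
    (hs : p s = none) (h : (parentGraph p).Reachable r s) : r = s := by
  have s_descends : ReflTransGen (IsParent p) r s :=
    reflTransGen_isParent_of_reachable hp le_rfl (fun u hu => by simp [IsParent, hr] at hu) h
  rcases s_descends.cases_tail with rfl | ⟨u, -, hu⟩
  · rfl
  · simp [IsParent, hs] at hu

lemma existsUnique_root_reachable (hp : WellFounded (IsParent p)) (v : V) :
    ∃! r, p r = none ∧ (parentGraph p).Reachable r v := by
  obtain ⟨r, hr, hrv⟩ := exists_root_reachable hp v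
  exact ⟨r, ⟨hr, hrv⟩, fun s ⟨hs, hsv⟩ =>
    eq_of_reachable_of_eq_none hp hs hr (hsv.trans hrv.symm)⟩

lemma eq_of_parentGraph_eq (hp : WellFounded (IsParent p)) (hq : WellFounded (IsParent q))
    (hgraph : parentGraph p = parentGraph q) (hroots : ∀ v, p v = none ↔ q v = none) : p = q := by
  funext v
  induction v using hp.induction with
  | _ v ih =>
    rcases hv : p v with _ | w
    · exact ((hroots v).1 hv).symm
    · have hadj : (parentGraph q).Adj v w := hgraph ▸ (parentGraph_adj hp).2 (.inr hv)
      rcases (parentGraph_adj hq).1 hadj with hvw | hwv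
      · have hvw' : IsParent p v w := (ih w hv).trans hvw
        exact (hp.asymmetric _ _ hv hvw').elim
      · exact hwv.symm

lemma exists_adj_dist_lt (h : G.Reachable v r) (hne : v ≠ r) :
    ∃ w, G.Adj v w ∧ G.dist w r < G.dist v r := by
  obtain ⟨walk, hwalk⟩ := h.exists_walk_length_eq_dist
  cases walk with
  | nil => exact absurd rfl hne
  | cons hadj tail =>
    refine ⟨_, hadj, (SimpleGraph.dist_le tail).trans_lt ?_⟩
    rw [← hwalk, SimpleGraph.Walk.length_cons]
    exact Nat.lt_succ_self _

lemma exists_isParent_imp_dist_lt {S : Set V} {root : V → V}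
    (hroot : ∀ v, root v ∈ S ∧ G.Reachable (root v) v) :
    ∃ p : V → Option V, (∀ v, p v = none ↔ v ∈ S) ∧
      ∀ v w, IsParent p w v → G.Adj v w ∧ G.dist w (root v) < G.dist v (root v) := by
  classical
  have exists_closer (v : V) (hv : v ∉ S) :
      ∃ w, G.Adj v w ∧ G.dist w (root v) < G.dist v (root v) :=
    exists_adj_dist_lt (hroot v).2.symm fun h => hv (h ▸ (hroot v).1)
  choose! next hnext using exists_closer
  refine ⟨fun v => if v ∈ S then none else some (next v), fun v => by simp, fun v w hw => ?_⟩
  obtain ⟨hv, rfl⟩ : v ∉ S ∧ next v = w := by simpa [IsParent] using hw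
  exact hnext v hv

lemma eq_of_isAcyclic_of_le_of_reachable (hG : G.IsAcyclic) (hle : H ≤ G)
    (h : ∀ v w, G.Reachable v w → H.Reachable v w) : H = G := by
  have hreach : H.Reachable = G.Reachable := by
    ext v w
    exact ⟨fun hH => hH.mono hle, h v w⟩
  have hmax := (SimpleGraph.maximal_isAcyclic_iff_reachable_eq hle (hG.anti hle)).2 hreach
  exact hle.antisymm (hmax.le_of_ge ⟨le_rfl, hG⟩ hle)

lemma exists_parentGraph_eq {S : Set V} (hG : G.IsAcyclic)
    (hS : ∀ v, ∃! r, r ∈ S ∧ G.Reachable r v) :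
    ∃ p, WellFounded (IsParent p) ∧ parentGraph p = G ∧ {v | p v = none} = S := by
  choose root hroot root_unique using hS
  have root_eq {v w : V} (h : G.Reachable v w) : root v = root w :=
    root_unique w _ ⟨(hroot v).1, (hroot v).2.trans h⟩
  obtain ⟨p, hpS, hpG⟩ := exists_isParent_imp_dist_lt hroot
  have hp : WellFounded (IsParent p) := by
    refine Subrelation.wf (fun {w v} hw => ?_) (measure fun v => G.dist v (root v)).wf
    obtain ⟨hadj, hlt⟩ := hpG v w hw
    change G.dist w (root w) < G.dist v (root v)
    exact root_eq hadj.reachable ▸ hlt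
  have hle : parentGraph p ≤ G := by
    intro v w hvw
    rcases (parentGraph_adj hp).1 hvw with h | h
    · exact (hpG w v h).1.symm
    · exact (hpG v w h).1
  have root_reachable (v : V) : (parentGraph p).Reachable (root v) v := by
    obtain ⟨r, hr, hrv⟩ := exists_root_reachable hp v
    rwa [← root_unique v r ⟨(hpS r).1 hr, hrv.mono hle⟩]
  refine ⟨p, hp, eq_of_isAcyclic_of_le_of_reachable hG hle fun v w h => ?_, Set.ext hpS⟩
  exact (root_reachable v).symm.trans (root_eq h ▸ root_reachable w)

end ParentGraph

section Contraction

/-- The effect on parents of contracting the vertex `none` of `Option U` into its own parent `o`: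
a vertex whose parent was `none` gets the parent `o`, or becomes a root if there is no `o`. -/
def contract (o : Option U) : Option (Option U) → Option U
  | none => none
  | some none => o
  | some (some u) => some u

lemma wellFounded_isParent_contract_iff {p : Option U → Option (Option U)} {o : Option U}
    (ho : p none = o.map some) :
    WellFounded (IsParent p) ↔ WellFounded (IsParent (contract o ∘ p ∘ some)) := by
  constructor
  · intro hp
    refine Subrelation.wf (fun {u v} huv => ?_) (InvImage.wf some hp.transGen)
    change contract o (p (some v)) = some u at huv
    change TransGen (IsParent p) (some u) (some v)
    rcases hv : p (some v) with _ | _ | u'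
    · simp [hv, contract] at huv
    · obtain rfl : o = some u := by simpa only [hv, contract] using huv
      exact .tail (.single ho) hv
    · obtain rfl : u' = u := by simpa only [hv, contract, Option.some.injEq] using huv
      exact .single hv
  · intro hq
    have acc_none (h : ∀ u, o = some u → Acc (IsParent p) (some u)) : Acc (IsParent p) none := by
      refine ⟨_, fun v hv => ?_⟩
      obtain ⟨u, hu, rfl⟩ := Option.map_eq_some_iff.1 (ho.symm.trans hv)
      exact h u hu
    have acc_some (u : U) : Acc (IsParent p) (some u) := by
      induction u using hq.induction with
      | _ u ih =>
        refine ⟨_, ?_⟩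
        rintro (_ | u') (hu : p (some u) = _)
        · exact acc_none fun u' hu' => ih u' (by simp [IsParent, hu, hu', contract])
        · exact ih u' (by simp [IsParent, hu, contract])
    exact ⟨Option.rec (acc_none fun u _ => acc_some u) acc_some⟩

end Contraction

section Pushforward

variable [Fintype A] [CommSemiring R]

open Classical in
/-- The pushforward of a weight function along a map of finite types. -/
noncomputable def pushforward (c : A → B) (w : A → R) (b : B) : R :=
  ∑ a with c a = b, w a

lemma sum_pushforward [Fintype B] (c : A → B) (w : A → R) :
    ∑ b, pushforward c w b = ∑ a, w a := by
  classical
  exact Finset.sum_fiberwise _ _ _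

open Classical in
lemma sum_prod_filter_comp {ι : Type*} [Fintype ι] [DecidableEq ι] [Fintype B] (c : A → B)
    (P : (ι → B) → Prop) (w : A → R) :
    ∑ f : ι → A with P (c ∘ f), ∏ i, w (f i) =
      ∑ g : ι → B with P g, ∏ i, pushforward c w (g i) := by
  rw [← Finset.sum_fiberwise_of_maps_to (g := (c ∘ ·)) (t := Finset.univ.filter P) (by simp)]
  refine Finset.sum_congr rfl fun g hg => ?_
  simp only [pushforward]
  rw [Finset.prod_univ_sum]
  refine Finset.sum_congr ?_ fun _ _ => rfl
  ext f
  simp only [Finset.mem_filter, Finset.mem_univ, true_and, Fintype.mem_piFinset] at hg ⊢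
  exact ⟨fun h => congrFun h.2, fun h => have hf : c ∘ f = g := funext h; ⟨hf ▸ hg, hf⟩⟩

lemma pushforward_contract_none [Fintype U] (w : Option (Option U) → R) (o : Option U) :
    pushforward (contract o) w none = w none + o.elim (w (some none)) fun _ => 0 := by
  rw [pushforward, Finset.sum_filter]
  cases o <;> simp [Fintype.sum_option, contract]

end Pushforward

section ParentMapSum

variable [CommSemiring R] [Fintype V] [DecidableEq V] [Fintype W] [DecidableEq W]
  [Fintype U] [DecidableEq U]

open Classical in
/-- The total weight of the well-founded parent maps on `V`, that is, of the rooted forests on `V`,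
where a non-root with parent `u` has weight `w (some u)` and a root has weight `w none`. -/
noncomputable def parentMapSum (w : Option V → R) : R :=
  ∑ p : V → Option V with WellFounded (IsParent p), ∏ v, w (p v)

lemma parentMapSum_of_isEmpty [IsEmpty V] (w : Option V → R) : parentMapSum w = 1 := by
  have wf (p : V → Option V) : WellFounded (IsParent p) := ⟨isEmptyElim⟩
  simp [parentMapSum, wf]

lemma parentMapSum_comp_equiv (e : V ≃ W) (w : Option W → R) :
    parentMapSum (w ∘ Option.map e) = parentMapSum w := by
  refine Finset.sum_equiv (e.arrowCongr e.optionCongr) (fun p => ?_) fun p _ => ?_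
  · simp only [Finset.mem_filter, Finset.mem_univ, true_and]
    exact (wellFounded_isParent_conj_iff e p).symm
  · exact Fintype.prod_equiv e _ _ fun v => by simp

lemma parentMapSum_option (w : Option (Option U) → R) :
    parentMapSum w =
      ∑ o : Option U, w (o.map some) * parentMapSum (pushforward (contract o) w) := by
  classical
  let extend (a : Option (Option U)) (q : U → Option (Option U)) (v : Option U) := v.elim a q
  have not_wf (q) : ¬ WellFounded (IsParent (extend (some none) q)) :=
    fun h => h.irrefl.irrefl none rfl
  calc
    parentMapSum w = ∑ a, w a * ∑ q with WellFounded (IsParent (extend a q)), ∏ u, w (q u) := by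
      simp only [parentMapSum, Finset.sum_filter, Finset.mul_sum, ← Fintype.sum_prod_type']
      refine Fintype.sum_equiv Equiv.piOptionEquivProd _ _ fun p => ?_
      have hp : extend (p none) (fun u => p (some u)) = p := by ext1 v; cases v <;> rfl
      simp only [Equiv.piOptionEquivProd_apply, Fintype.prod_option, mul_ite, mul_zero]
      rw [hp]
    _ = ∑ o : Option U, w (o.map some) *
          ∑ q with WellFounded (IsParent (extend (o.map some) q)), ∏ u, w (q u) := by
      simp [Fintype.sum_option, not_wf]
    _ = ∑ o : Option U, w (o.map some) * parentMapSum (pushforward (contract o) w) := by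
      refine Finset.sum_congr rfl fun o _ => congrArg _ ?_
      simp only [wellFounded_isParent_contract_iff (p := extend (o.map some) _) rfl]
      exact sum_prod_filter_comp (contract o) (fun q => WellFounded (IsParent q)) w

lemma parentMapSum_option_eq {n : ℕ}
    (hU : ∀ w : Option U → R, parentMapSum w = w none * (∑ o, w o) ^ n)
    (w : Option (Option U) → R) : parentMapSum w = w none * (∑ o, w o) ^ (n + 1) := by
  have hsum : ∑ o : Option U, w (o.map some) * pushforward (contract o) w none =
      w none * ∑ o, w o := by
    simp only [pushforward_contract_none, Fintype.sum_option, Option.map_none, Option.map_some,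
      Option.elim_none, Option.elim_some, add_zero, ← Finset.sum_mul]
    ring
  simp only [parentMapSum_option, hU, sum_pushforward, ← mul_assoc, ← Finset.sum_mul, hsum]
  ring

lemma parentMapSum_eq_of_equiv (e : V ≃ W) {n : ℕ}
    (hV : ∀ w : Option V → R, parentMapSum w = w none * (∑ o, w o) ^ n) (w : Option W → R) :
    parentMapSum w = w none * (∑ o, w o) ^ n := by
  rw [← parentMapSum_comp_equiv e, hV, ← e.optionCongr.sum_comp w]
  rfl

lemma parentMapSum_option_fin (n : ℕ) (w : Option (Option (Fin n)) → R) :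
    parentMapSum w = w none * (∑ o, w o) ^ n := by
  induction n with
  | zero =>
    rw [parentMapSum_option, Fintype.sum_option]
    simp [parentMapSum_of_isEmpty]
  | succ n ih => exact parentMapSum_option_eq (parentMapSum_eq_of_equiv (finSuccEquiv n).symm ih) w

theorem parentMapSum_eq [Nonempty V] (w : Option V → R) :
    parentMapSum w = w none * (∑ o, w o) ^ (Fintype.card V - 1) := by
  have hcard : Fintype.card (Option (Fin (Fintype.card V - 1))) = Fintype.card V := by
    simp [Nat.sub_add_cancel Fintype.card_pos]
  exact parentMapSum_eq_of_equiv (Fintype.equivOfCardEq hcard) (parentMapSum_option_fin _) w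

end ParentMapSum

section LabelledForests

variable {m : ℕ} (X Y : Type*)

/-- The rooted forest of a well-founded parent map. -/
def toRootedForest (p : {p : Fin m → Option (Fin m) // WellFounded (IsParent p)}) :
    RootedForest m where
  graph := parentGraph p.1
  acyclic := parentGraph_isAcyclic p.2
  roots := {v | p.1 v = none}
  existsUnique_root := existsUnique_root_reachable p.2

lemma toRootedForest_bijective : Function.Bijective (toRootedForest (m := m)) := by
  constructor
  · intro p q h
    have hroots : {v | p.1 v = none} = {v | q.1 v = none} := congrArg RootedForest.roots h
    have hgraph : parentGraph p.1 = parentGraph q.1 := congrArg RootedForest.graph h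
    exact Subtype.ext (eq_of_parentGraph_eq p.2 q.2 hgraph (Set.ext_iff.1 hroots))
  · rintro ⟨G, hG, S, hS⟩
    obtain ⟨p, hp, rfl, rfl⟩ := exists_parentGraph_eq hG hS
    exact ⟨⟨p, hp⟩, rfl⟩

lemma card_labellings [Fintype V] (p : V → Option V) :
    Nat.card (({v // ¬ p v = none} → X) × ({v // p v = none} → Y)) =
      ∏ v, (p v).elim (Nat.card Y) fun _ => Nat.card X := by
  have label_card (v : V) : ((p v).elim (Nat.card Y) fun _ => Nat.card X) =
      if p v = none then Nat.card Y else Nat.card X := by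
    cases p v <;> simp
  simp [label_card, Finset.prod_ite, Nat.card_fun, Fintype.card_subtype, mul_comm]

lemma card_labelledForest [Finite X] [Finite Y] :
    Nat.card ((F : RootedForest m) × ({v : Fin m // v ∉ F.roots} → X) ×
        ({v : Fin m // v ∈ F.roots} → Y)) =
      parentMapSum fun o : Option (Fin m) => o.elim (Nat.card Y) fun _ => Nat.card X := by
  classical
  calc
    _ = Nat.card ((p : {p : Fin m → Option (Fin m) // WellFounded (IsParent p)}) ×
          ({v // ¬ p.1 v = none} → X) × ({v // p.1 v = none} → Y)) :=
      Nat.card_congr (Equiv.ofBijective _ toRootedForest_bijective).sigmaCongrLeft.symm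
    _ = ∑ p : {p : Fin m → Option (Fin m) // WellFounded (IsParent p)},
          ∏ v, (p.1 v).elim (Nat.card Y) fun _ => Nat.card X := by
      simp only [Nat.card_sigma, card_labellings]
    _ = parentMapSum fun o : Option (Fin m) => o.elim (Nat.card Y) fun _ => Nat.card X := by
      rw [parentMapSum]
      exact (Finset.sum_subtype _ (p := fun p => WellFounded (IsParent p)) (by simp)
        fun p : Fin m → Option (Fin m) => ∏ v, (p v).elim (Nat.card Y) fun _ => Nat.card X).symm

end LabelledForests

/-- The number of rooted forests on `[m]` with a label in `{1,…,x}` on each non-root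
vertex and a label in `{1,…,y}` on each root equals `(m·x + y)^{m−1} · y`. -/
theorem labeled_forest_count (m x y : ℕ) (hm : 1 ≤ m) :
    Nat.card ((F : RootedForest m) ×
        ({v : Fin m // v ∉ F.roots} → Fin x) × ({v : Fin m // v ∈ F.roots} → Fin y)) =
      (m * x + y) ^ (m - 1) * y := by
  have : Nonempty (Fin m) := ⟨⟨0, hm⟩⟩
  rw [card_labelledForest, parentMapSum_eq]
  simp [Fintype.sum_option, add_comm, mul_comm]
end

section
/- For every n ≥ 2, writing ℓ(T) for the number of vertices of degree 1 of a labeled tree T on [n], the sum over all labeled trees T on [n] of ℓ(T)·(ℓ(T) − 1) equals n·(n−1)·(n−2)^{n−2}. -/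
/-! A tree whose set of leaves contains `S`, where `S` is not the whole vertex set `V`, is obtained
in exactly one way from a tree on the complement of `S` by joining each vertex of `S` to a vertex of
the complement. With `n = |V|` and Cayley's formula on the complement, there are
`(n - |S|) ^ (n - 2)` such trees.

The same bijection proves Cayley's formula by induction on `n ≥ 2`. Fix a vertex `r`. Every tree has
at least two leaves, hence a leaf different from `r`, so by inclusion-exclusion the alternating sum
over `S ⊆ V \ {r}` of the numbers of trees in which all of `S` are leaves vanishes. Replacing these
numbers by `(n - |S|) ^ (n - 2)` gives the `(n - 1)`-st finite difference of a polynomial of degree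
`n - 2`, which vanishes too. By induction the terms with `S ≠ ∅` agree, hence so do the terms with
`S = ∅`.

Finally, counting pairs of a tree and an ordered `k`-tuple of its leaves gives
`n (n - 1) ⋯ (n - k + 1) (n - k) ^ (n - 2)` for the `k`-th falling factorial moment. -/

/-- The number of leaves (vertices of degree 1) of a graph on `Fin n`. -/
noncomputable def leafCount {n : ℕ} (T : SimpleGraph (Fin n)) : ℕ :=
  Nat.card {v : Fin n // Nat.card (T.neighborSet v) = 1}

open Finset SimpleGraph
open scoped Nat

variable {V : Type*}

/-- The set of leaves. A vertex with infinitely many neighbours is not a leaf, since `Nat.card` is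
then `0`. -/
def leafSet (G : SimpleGraph V) : Set V := {v | Nat.card (G.neighborSet v) = 1}

section LeafSet

variable {G : SimpleGraph V} {S : Set V} {u v w : V}

theorem mem_leafSet_iff_existsUnique_adj : v ∈ leafSet G ↔ ∃! w, G.Adj v w := by
  change (G.neighborSet v).ncard = 1 ↔ _
  simp [Set.ncard_eq_one, Set.eq_singleton_iff_unique_mem, ExistsUnique]

theorem existsUnique_adj_of_mem_leafSet (hv : v ∈ leafSet G) : ∃! w, G.Adj v w :=
  mem_leafSet_iff_existsUnique_adj.1 hv

theorem subsingleton_neighborSet_of_mem_leafSet (hv : v ∈ leafSet G) :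
    (G.neighborSet v).Subsingleton :=
  fun _ ha _ hb => (existsUnique_adj_of_mem_leafSet hv).unique ha hb

theorem two_le_ncard_leafSet [Finite V] [Nontrivial V] (hG : G.IsTree) :
    2 ≤ (leafSet G).ncard := by
  classical
  have := Fintype.ofFinite V
  obtain ⟨u, v, huv, hu, hv⟩ := hG.exists_ne_and_degree_eq_one
  simp only [degree_eq_one_iff_existsUnique_adj, ← mem_leafSet_iff_existsUnique_adj] at hu hv
  exact (Set.one_lt_ncard_iff).2 ⟨u, v, hu, hv, huv⟩

theorem eq_or_eq_of_adj_of_mem_leafSet (hG : G.Preconnected) (hu : u ∈ leafSet G)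
    (hv : v ∈ leafSet G) (huv : G.Adj u v) (w : V) : w = u ∨ w = v := by
  induction (reachable_iff_reflTransGen u w).1 (hG u w) with
  | refl => exact .inl rfl
  | tail _ hxy ih =>
    rcases ih with rfl | rfl
    · exact .inr ((existsUnique_adj_of_mem_leafSet hu).unique hxy huv)
    · exact .inl ((existsUnique_adj_of_mem_leafSet hv).unique hxy huv.symm)

theorem exists_adj_mem_compl_of_subset_leafSet (hG : G.Preconnected) (hS : S ⊆ leafSet G)
    (hne : Sᶜ.Nonempty) (hu : u ∈ S) : ∃ v ∈ Sᶜ, G.Adj u v := by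
  obtain ⟨v, huv, -⟩ := existsUnique_adj_of_mem_leafSet (hS hu)
  refine ⟨v, fun hv => ?_, huv⟩
  obtain ⟨w, hw⟩ := hne
  rcases eq_or_eq_of_adj_of_mem_leafSet hG (hS hu) (hS hv) huv w with rfl | rfl
  exacts [hw hu, hw hv]

theorem card_le_two_of_leafSet_eq_univ (hG : G.Preconnected) (h : leafSet G = Set.univ) :
    Nat.card V ≤ 2 := by
  rcases isEmpty_or_nonempty V with _ | ⟨⟨u⟩⟩
  · simp
  obtain ⟨v, huv, -⟩ := existsUnique_adj_of_mem_leafSet (h ▸ Set.mem_univ u)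
  have huniv : ({u, v} : Set V) = Set.univ := Set.eq_univ_of_forall
    (eq_or_eq_of_adj_of_mem_leafSet hG (h ▸ Set.mem_univ u) (h ▸ Set.mem_univ v) huv)
  rw [← Set.ncard_univ, ← huniv]
  exact (Set.ncard_pair huv.ne).le

theorem isAcyclic_of_isAcyclic_induce_compl (hS : S ⊆ leafSet G)
    (h : (G.induce Sᶜ).IsAcyclic) : G.IsAcyclic := by
  intro u c hc
  -- A vertex on a cycle has two neighbours on it, so the cycle avoids the leaves.
  have hsupp : ∀ x ∈ c.support, x ∈ Sᶜ := by
    intro x hx hxS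
    obtain ⟨y, z, hyz, heq⟩ := Set.ncard_eq_two.1 (hc.ncard_neighborSet_toSubgraph_eq_two hx)
    refine hyz (subsingleton_neighborSet_of_mem_leafSet (hS hxS) ?_ ?_) <;>
      exact c.toSubgraph.neighborSet_subset x (by simp [heq])
  refine h (c.induce Sᶜ hsupp) (Walk.IsCycle.of_map (f := (Embedding.induce Sᶜ).toHom) ?_)
  rwa [c.map_induce hsupp]

theorem isTree_induce_compl_iff (hS : S ⊆ leafSet G) (hadj : ∀ u ∈ S, ∃ v ∈ Sᶜ, G.Adj u v) :
    (G.induce Sᶜ).IsTree ↔ G.IsTree := by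
  have exists_reachable (u : V) : ∃ a : ↥Sᶜ, G.Reachable u a := by
    by_cases hu : u ∈ S
    · obtain ⟨v, hv, huv⟩ := hadj u hu
      exact ⟨⟨v, hv⟩, huv.reachable⟩
    · exact ⟨⟨u, hu⟩, .refl u⟩
  refine ⟨fun h => ?_, fun h => ?_⟩
  · have : Nonempty V := h.connected.nonempty.map Subtype.val
    refine ⟨⟨fun u v => ?_⟩, isAcyclic_of_isAcyclic_induce_compl hS h.isAcyclic⟩
    obtain ⟨a, ha⟩ := exists_reachable u
    obtain ⟨b, hb⟩ := exists_reachable v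
    have hab : G.Reachable a b := (h.connected.preconnected a b).map (Embedding.induce Sᶜ).toHom
    exact ha.trans (hab.trans hb.symm)
  · have : Nonempty ↥Sᶜ := h.connected.nonempty.map fun u => (exists_reachable u).choose
    refine ⟨⟨h.connected.preconnected.induce_of_degree_eq_one fun v hv => ?_⟩, h.isAcyclic.induce _⟩
    exact subsingleton_neighborSet_of_mem_leafSet (hS (Set.notMem_compl_iff.1 hv))

end LeafSet

/-- The graph on `V` obtained from a graph `H` on the complement of `S` by joining each `s ∈ S` to
the single vertex `g s`, so that the elements of `S` become leaves. -/
def attachLeaves {S : Set V} (H : SimpleGraph ↥Sᶜ) (g : S → ↥Sᶜ) : SimpleGraph V :=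
  H.spanningCoe ⊔ fromEdgeSet (Set.range fun s : S => s((s : V), (g s : V)))

section AttachLeaves

variable {S : Set V} {H : SimpleGraph ↥Sᶜ} {g : S → ↥Sᶜ} {u v : V}

theorem attachLeaves_adj : (attachLeaves H g).Adj u v ↔
    (∃ (hu : u ∈ Sᶜ) (hv : v ∈ Sᶜ), H.Adj ⟨u, hu⟩ ⟨v, hv⟩) ∨
      (∃ hu : u ∈ S, v = g ⟨u, hu⟩) ∨ ∃ hv : v ∈ S, u = g ⟨v, hv⟩ := by
  have (s : S) : (g s : V) ∉ S := (g s).2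
  simp only [attachLeaves, sup_adj, map_adj, fromEdgeSet_adj, Set.mem_range, Sym2.eq_iff]
  grind [Function.Embedding.subtype_apply]

theorem attachLeaves_adj_of_mem (hu : u ∈ S) : (attachLeaves H g).Adj u v ↔ v = g ⟨u, hu⟩ := by
  have (s : S) : (g s : V) ∉ S := (g s).2
  grind [attachLeaves_adj]

theorem induce_compl_attachLeaves : (attachLeaves H g).induce Sᶜ = H := by
  ext ⟨u, hu⟩ ⟨v, hv⟩
  rw [induce_adj]
  grind [attachLeaves_adj]

theorem subset_leafSet_attachLeaves : S ⊆ leafSet (attachLeaves H g) := fun u hu => by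
  simp [mem_leafSet_iff_existsUnique_adj, attachLeaves_adj_of_mem hu]

theorem attachLeaves_induce_compl {G : SimpleGraph V} (hS : S ⊆ leafSet G)
    (hg : ∀ s : S, G.Adj s (g s)) : attachLeaves (G.induce Sᶜ) g = G := by
  have adj_iff {u v : V} (hu : u ∈ S) : (attachLeaves (G.induce Sᶜ) g).Adj u v ↔ G.Adj u v := by
    rw [attachLeaves_adj_of_mem hu]
    exact ⟨fun h => h ▸ hg ⟨u, hu⟩,
      fun h => (existsUnique_adj_of_mem_leafSet (hS hu)).unique h (hg ⟨u, hu⟩)⟩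
  ext u v
  by_cases hu : u ∈ S
  · exact adj_iff hu
  by_cases hv : v ∈ S
  · rw [SimpleGraph.adj_comm, adj_iff hv, G.adj_comm]
  · have := congr(($(induce_compl_attachLeaves (H := G.induce Sᶜ) (g := g))).Adj ⟨u, hu⟩ ⟨v, hv⟩)
    simpa using this

theorem isTree_attachLeaves_iff : (attachLeaves H g).IsTree ↔ H.IsTree := by
  rw [← isTree_induce_compl_iff subset_leafSet_attachLeaves, induce_compl_attachLeaves]
  exact fun u hu => ⟨g ⟨u, hu⟩, (g ⟨u, hu⟩).2, (attachLeaves_adj_of_mem hu).2 rfl⟩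

theorem attachLeaves_injective2 :
    Function.Injective2 (attachLeaves : SimpleGraph ↥Sᶜ → (S → ↥Sᶜ) → SimpleGraph V) := by
  intro H H' g g' h
  refine ⟨?_, funext fun s => Subtype.ext ?_⟩
  · rw [← induce_compl_attachLeaves (H := H) (g := g), h, induce_compl_attachLeaves]
  · rw [← attachLeaves_adj_of_mem (H := H') s.2, ← h, attachLeaves_adj_of_mem]

end AttachLeaves

/-- The trees on `V` all of whose vertices in `S` are leaves. -/
def treesWithLeaves (S : Set V) : Set (SimpleGraph V) := {T | T.IsTree ∧ S ⊆ leafSet T}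

theorem treesWithLeaves_empty : treesWithLeaves (∅ : Set V) = {T | T.IsTree} := by
  simp [treesWithLeaves]

theorem image2_attachLeaves {S : Set V} (hS : Sᶜ.Nonempty) :
    Set.image2 attachLeaves {H : SimpleGraph ↥Sᶜ | H.IsTree} Set.univ = treesWithLeaves S := by
  refine Set.Subset.antisymm ?_ fun T hT => ?_
  · rintro _ ⟨H, hH, g, -, rfl⟩
    exact ⟨isTree_attachLeaves_iff.2 hH, subset_leafSet_attachLeaves⟩
  · have hadj : ∀ u ∈ S, ∃ v ∈ Sᶜ, T.Adj u v := fun u hu =>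
      exists_adj_mem_compl_of_subset_leafSet hT.1.connected.preconnected hT.2 hS hu
    choose g hg hTg using hadj
    exact ⟨T.induce Sᶜ, (isTree_induce_compl_iff hT.2 fun u hu => ⟨_, hg u hu, hTg u hu⟩).2 hT.1,
      fun s => ⟨g s s.2, hg s s.2⟩, trivial, attachLeaves_induce_compl hT.2 fun s => hTg s s.2⟩

theorem ncard_treesWithLeaves_eq_mul [Finite V] {S : Set V} (hS : Sᶜ.Nonempty) :
    (treesWithLeaves S).ncard =
      {H : SimpleGraph ↥Sᶜ | H.IsTree}.ncard * Sᶜ.ncard ^ S.ncard := by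
  rw [← image2_attachLeaves hS, ← Set.image_uncurry_prod,
    Set.ncard_image_of_injective _ attachLeaves_injective2.uncurry, Set.ncard_prod, Set.ncard_univ,
    Nat.card_fun]
  rfl

theorem sum_powerset_neg_one_pow_card_mul_sub_pow {α R : Type*} [CommRing R] (A : Finset α) {j : ℕ}
    (hj : j < #A) (x : R) : ∑ S ∈ A.powerset, (-1) ^ #S * (x - #S) ^ j = 0 := by
  have h := congrFun (fwdDiff_iter_pow_eq_zero_of_lt (R := R) hj) (x - #A)
  rw [fwdDiff_iter_eq_sum_shift, ← sum_flip, Pi.zero_apply] at h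
  rw [sum_powerset_apply_card fun k => (-1 : R) ^ k * (x - k) ^ j, ← h]
  refine sum_congr rfl fun k hk => ?_
  have hk : k ≤ #A := mem_range_succ_iff.1 hk
  rw [Nat.sub_sub_self hk, Nat.choose_symm hk, nsmul_one, Nat.cast_sub hk, sub_add_sub_cancel,
    nsmul_eq_mul, zsmul_eq_mul]
  push_cast
  ring

theorem ncard_treesWithLeaves_eq_card_filter [Fintype {T : SimpleGraph V // T.IsTree}] (S : Set V)
    [DecidablePred fun T : {T : SimpleGraph V // T.IsTree} => S ⊆ leafSet T.val] :
    (treesWithLeaves S).ncard = #{T : {T : SimpleGraph V // T.IsTree} | S ⊆ leafSet T.val} := by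
  rw [← Fintype.card_subtype, ← Nat.card_eq_fintype_card]
  exact (Nat.card_congr (Equiv.subtypeSubtypeEquivSubtypeInter _ _)).symm

theorem sum_neg_one_pow_card_mul_ncard_treesWithLeaves [Fintype V] [DecidableEq V] [Nontrivial V]
    (r : V) : ∑ S ∈ ({r}ᶜ : Finset V).powerset,
      (-1 : ℤ) ^ #S * (treesWithLeaves (S : Set V)).ncard = 0 := by
  classical
  let treesWithLeaf (v : V) : Finset {T : SimpleGraph V // T.IsTree} := {T | v ∈ leafSet T.val}
  have inf_treesWithLeaf (S : Finset V) :
      (treesWithLeaves (S : Set V)).ncard = #(S.inf treesWithLeaf) := by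
    rw [ncard_treesWithLeaves_eq_card_filter]
    congr 1
    ext T
    simp [treesWithLeaf, mem_inf, Set.subset_def]
  have inf_compl : ({r}ᶜ : Finset V).inf (fun v => (treesWithLeaf v)ᶜ) = ∅ := by
    refine eq_empty_of_forall_notMem fun T hT => ?_
    obtain ⟨v, hv, hvr⟩ := Set.exists_ne_of_one_lt_ncard (two_le_ncard_leafSet T.2) r
    simp only [mem_inf, mem_compl, mem_singleton, treesWithLeaf, mem_filter_univ] at hT
    exact hT v hvr hv
  simp_rw [inf_treesWithLeaf, ← inclusion_exclusion_card_inf_compl, inf_compl, card_empty,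
    Nat.cast_zero]

theorem ncard_treesWithLeaves_of_cayley_compl [Finite V] [Nontrivial V] {S : Set V}
    (hS : Sᶜ.Nonempty)
    (h : {H : SimpleGraph ↥Sᶜ | H.IsTree}.ncard = Nat.card ↥Sᶜ ^ (Nat.card ↥Sᶜ - 2)) :
    (treesWithLeaves S).ncard = (Nat.card V - S.ncard) ^ (Nat.card V - 2) := by
  have hcard := Set.ncard_add_ncard_compl S
  have hV := Finite.one_lt_card (α := V)
  have hpos := hS.ncard_pos
  rw [ncard_treesWithLeaves_eq_mul hS, h, Nat.card_coe_set_eq, ← pow_add,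
    show Nat.card V - S.ncard = Sᶜ.ncard by lia]
  -- If `Sᶜ` is a point, truncation makes the exponents differ, but the base is `1`.
  obtain hone | htwo : Sᶜ.ncard = 1 ∨ 2 ≤ Sᶜ.ncard := by lia
  · simp [hone]
  · congr 1
    lia

theorem ncard_isTree [Finite V] [Nonempty V] :
    {T : SimpleGraph V | T.IsTree}.ncard = Nat.card V ^ (Nat.card V - 2) := by
  classical
  induction hn : Nat.card V using Nat.strong_induction_on generalizing V with | _ n ih
  subst hn
  rcases subsingleton_or_nontrivial V with _ | _
  · simp [IsTree.of_subsingleton]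
  have := Fintype.ofFinite V
  obtain ⟨r⟩ := ‹Nonempty V›
  have hcard : Nat.card V - 2 < #({r}ᶜ : Finset V) := by
    have := Finite.one_lt_card (α := V)
    simp only [card_compl, card_singleton, ← Nat.card_eq_fintype_card]
    lia
  have hnonempty {S : Finset V} (hSr : S ∈ ({r}ᶜ : Finset V).powerset) (hS : S ≠ ∅) :
      (treesWithLeaves (S : Set V)).ncard = ((Nat.card V : ℤ) - #S) ^ (Nat.card V - 2) := by
    have hr : ((S : Set V)ᶜ).Nonempty := ⟨r, fun hrS => by simpa using mem_powerset.1 hSr hrS⟩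
    have := hr.to_subtype
    have hlt : Nat.card ↥(S : Set V)ᶜ < Nat.card V := by
      have hadd := Set.ncard_add_ncard_compl (S : Set V)
      have hpos := card_pos.2 (nonempty_iff_ne_empty.2 hS)
      rw [Set.ncard_coe_finset] at hadd
      rw [Nat.card_coe_set_eq]
      lia
    rw [ncard_treesWithLeaves_of_cayley_compl hr (ih _ hlt rfl), Set.ncard_coe_finset]
    push_cast [Nat.card_eq_fintype_card, card_le_univ S]
    rfl
  have hsum := congr($(sum_neg_one_pow_card_mul_ncard_treesWithLeaves r) -
    $(sum_powerset_neg_one_pow_card_mul_sub_pow ({r}ᶜ : Finset V) hcard (Nat.card V : ℤ)))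
  rw [← sum_sub_distrib, sum_eq_single ∅ (fun S hSr hS => by rw [hnonempty hSr hS, sub_self])
    (by simp)] at hsum
  simp only [card_empty, pow_zero, one_mul, Nat.cast_zero, sub_zero, sub_eq_zero, coe_empty,
    treesWithLeaves_empty] at hsum
  exact_mod_cast hsum

theorem ncard_treesWithLeaves_univ [Finite V] [Nontrivial V] :
    (treesWithLeaves (Set.univ : Set V)).ncard = 0 ^ (Nat.card V - 2) := by
  obtain htwo | hlt := (Nat.succ_le_of_lt (Finite.one_lt_card (α := V))).eq_or_lt
  · have leafSet_eq_univ {T : SimpleGraph V} (hT : T.IsTree) : leafSet T = Set.univ :=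
      Set.eq_of_subset_of_ncard_le (Set.subset_univ _) <| by
        rw [Set.ncard_univ, ← htwo]
        exact two_le_ncard_leafSet hT
    have : treesWithLeaves (Set.univ : Set V) = {T | T.IsTree} := by
      ext T
      exact and_iff_left_of_imp fun hT => (leafSet_eq_univ hT).ge
    rw [this, ncard_isTree, ← htwo]
    rfl
  · rw [zero_pow (Nat.sub_ne_zero_of_lt hlt), Set.ncard_eq_zero, Set.eq_empty_iff_forall_notMem]
    exact fun T hT => hlt.not_ge <|
      card_le_two_of_leafSet_eq_univ hT.1.connected.preconnected (Set.univ_subset_iff.1 hT.2)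

theorem ncard_treesWithLeaves [Finite V] [Nontrivial V] (S : Set V) :
    (treesWithLeaves S).ncard = (Nat.card V - S.ncard) ^ (Nat.card V - 2) := by
  rcases Set.eq_empty_or_nonempty Sᶜ with hS | hS
  · obtain rfl := Set.compl_empty_iff.1 hS
    rw [Set.ncard_univ, Nat.sub_self, ncard_treesWithLeaves_univ]
  · have := hS.to_subtype
    exact ncard_treesWithLeaves_of_cayley_compl hS ncard_isTree

theorem sum_leaf_count_falling_general [Finite V] [Nontrivial V] (k : ℕ) :
    ∑ᶠ T : {T : SimpleGraph V // T.IsTree}, (leafSet T.val).ncard.descFactorial k =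
      (Nat.card V).descFactorial k * (Nat.card V - k) ^ (Nat.card V - 2) := by
  classical
  have := Fintype.ofFinite V
  have := Fintype.ofFinite {T : SimpleGraph V // T.IsTree}
  have hcount (T : SimpleGraph V) :
      (leafSet T).ncard.choose k = #{S ∈ (univ : Finset V).powersetCard k | ↑S ⊆ leafSet T} := by
    rw [Set.ncard_eq_toFinset_card', ← card_powersetCard]
    congr 1
    ext S
    simp [mem_powersetCard, ← Set.subset_toFinset, and_comm]
  calc ∑ᶠ T : {T : SimpleGraph V // T.IsTree}, (leafSet T.val).ncard.descFactorial k
    _ = k ! * ∑ T : {T : SimpleGraph V // T.IsTree},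
          #{S ∈ (univ : Finset V).powersetCard k | ↑S ⊆ leafSet T.val} := by
      simp_rw [finsum_eq_sum_of_fintype, Nat.descFactorial_eq_factorial_mul_choose, hcount, mul_sum]
    _ = k ! * ∑ S ∈ (univ : Finset V).powersetCard k, (treesWithLeaves (S : Set V)).ncard := by
      simp_rw [ncard_treesWithLeaves_eq_card_filter]
      exact congrArg (k ! * ·) (sum_card_bipartiteAbove_eq_sum_card_bipartiteBelow
        fun (T : {T : SimpleGraph V // T.IsTree}) (S : Finset V) => ↑S ⊆ leafSet T.val)
    _ = k ! * ∑ _S ∈ (univ : Finset V).powersetCard k, (Nat.card V - k) ^ (Nat.card V - 2) := by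
      congr 1
      refine sum_congr rfl fun S hS => ?_
      rw [ncard_treesWithLeaves, Set.ncard_coe_finset, mem_powersetCard_univ.1 hS]
    _ = (Nat.card V).descFactorial k * (Nat.card V - k) ^ (Nat.card V - 2) := by
      rw [sum_const, card_powersetCard, Finset.card_univ, smul_eq_mul, ← mul_assoc,
        ← Nat.descFactorial_eq_factorial_mul_choose, Nat.card_eq_fintype_card]

theorem leafCount_eq_ncard_leafSet {n : ℕ} (T : SimpleGraph (Fin n)) :
    leafCount T = (leafSet T).ncard := rfl

/-- The sum over all labeled trees `T` on `[n]` of `ℓ(T)·(ℓ(T)−1)`, where `ℓ(T)` is the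
number of leaves of `T`, equals `n·(n−1)·(n−2)^{n−2}`. -/
theorem sum_leaf_count_falling (n : ℕ) (hn : 2 ≤ n) :
    (∑ᶠ T : {T : SimpleGraph (Fin n) // T.IsTree},
        leafCount T.val * (leafCount T.val - 1)) =
      n * (n - 1) * (n - 2) ^ (n - 2) := by
  have := Fin.nontrivial_iff_two_le.2 hn
  simpa [Nat.descFactorial, mul_comm, leafCount_eq_ncard_leafSet] using
    sum_leaf_count_falling_general (V := Fin n) 2
end
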